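/- The calculus produced by the construction theorem is inner: d a = ω a − a ω for all a ∈ X, where ω = Σ_i ω_i d e^i with ω_i = ε(b^k) (χ^{-1})_{jk} S(π^j_i), and moreover each ω_i lies in X. -/

import Mathlib

open TensorProduct MulOpposite

/-- A covariant first order differential calculus on a left coideal subalgebra `X ⊆ H`,
satisfying the freeness condition with respect to `e : Fin M → X`. -/
structure CovCalc {H : Type} [Ring H] [HopfAlgebra ℂ H] (X : Subalgebra ℂ H)
    (comulX : X →ₗ[ℂ] H ⊗[ℂ] X) {M : ℕ} (e : Fin M → X) where
  Γ : Type
  [grp : AddCommGroup Γ]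
  [modC : Module ℂ Γ]
  [modL : Module X Γ]
  [modR : Module Xᵐᵒᵖ Γ]
  [comm : SMulCommClass X Xᵐᵒᵖ Γ]
  [tower : IsScalarTower ℂ X Γ]
  d : X →ₗ[ℂ] Γ
  leibniz : ∀ a b : X, d (a * b) = a • d b + op b • d a
  spanning : Submodule.span ℂ {x : Γ | ∃ a b : X, x = a • d b} = ⊤
  free : ∀ ω : Γ, ∃! c : Fin M → X, ω = ∑ i, c i • d (e i)
  covariant : ∃ ΔΓ : Γ →ₗ[ℂ] H ⊗[ℂ] Γ,
    ∀ (a b : X) (ι κ : Type) (_ : Fintype ι) (_ : Fintype κ)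
      (a1 : ι → H) (a2 : ι → X) (b1 : κ → H) (b2 : κ → X),
      comulX a = ∑ t, a1 t ⊗ₜ[ℂ] a2 t → comulX b = ∑ s, b1 s ⊗ₜ[ℂ] b2 s →
      ΔΓ (a • d b) = ∑ t, ∑ s, (a1 t * b1 s) ⊗ₜ[ℂ] (a2 t • d (b2 s))

attribute [instance] CovCalc.grp CovCalc.modC CovCalc.modL CovCalc.modR
  CovCalc.comm CovCalc.tower

/-- Isomorphism of two such calculi. -/
def CovCalc.Iso {H : Type} [Ring H] [HopfAlgebra ℂ H] {X : Subalgebra ℂ H}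
    {comulX : X →ₗ[ℂ] H ⊗[ℂ] X} {M : ℕ} {e : Fin M → X}
    (c c' : CovCalc X comulX e) : Prop :=
  ∃ φ : c.Γ ≃ₗ[ℂ] c'.Γ,
    (∀ a : X, φ (c.d a) = c'.d a) ∧
    (∀ (a : X) (x : c.Γ), φ (a • x) = a • φ x) ∧
    (∀ (a : X) (x : c.Γ), φ (op a • x) = op a • φ x)

/-!
Contracting `Δ(a) = a₁ ⊗ a₂` with `r(b^k, ν(·))` and with `χ^k` gives operators `R_k` and
`D_k = R_k - ε(b^k)`. Multiplicativity of `r` in its second argument yields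
`D_k(a c) - a D_k(c) = D_l(a) L_{kl}(c)`, where `L_{kl}` contracts with `r(ψ^k_l, ν(·))` and
`R_k = ε(b^l) L_{kl}`. The coefficients `ω_m` are exactly those with `ω_m D_l(e^m) = ε(b^l)`, so
`ω_m (D_k(e^m a) - e^m D_k(a)) = R_k(a) = D_k(a) + ε(b^k) a`; multiplied by the inverse of the
matrix `D_l(e^m)`, this says that `∂_i(a) + a ω_i` is the `i`-th coordinate of `ω a`.

For `ω_i ∈ X`, the commutation relation of `r` puts the entries of `x = (D_l(e^m))_{ml} ψᵀ` in `X`.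
The matrix `ψᵀ` is invertible because the Drinfeld functional `a ↦ r(a₁, S(a₂))` conjugates `ψ` to
`S²(ψ)`. Hence `x⁻¹` has entries in `X`, and `ω_i = b^k (x⁻¹)_{ki}`.
-/

section

open Algebra.TensorProduct Bialgebra Coalgebra HopfAlgebra Matrix

section MultiplicativeMatrix

variable {R H n : Type*} [CommRing R] [Ring H] [Fintype n] [DecidableEq n]

variable (R) in
/-- A multiplicative matrix over the bialgebra `H`, that is, the matrix of coefficients of a
finite-dimensional corepresentation. -/
structure IsMultiplicativeMatrix [Bialgebra R H] (ψ : Matrix n n H) : Prop where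
  comul_apply : ∀ i j, comul (R := R) (ψ i j) = ∑ k, ψ i k ⊗ₜ[R] ψ k j
  counit_apply : ∀ i j, counit (R := R) (ψ i j) = if i = j then 1 else 0

namespace IsMultiplicativeMatrix

lemma map_comul [Bialgebra R H] {ψ : Matrix n n H} (hψ : IsMultiplicativeMatrix R ψ) :
    ψ.map (comulAlgHom R H) =
      ψ.map (includeLeft : H →ₐ[R] H ⊗[R] H) * ψ.map (includeRight : H →ₐ[R] H ⊗[R] H) := by
  ext i j
  simp [Matrix.mul_apply, hψ.comul_apply]

variable [HopfAlgebra R H] {ψ : Matrix n n H} (hψ : IsMultiplicativeMatrix R ψ)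
include hψ

lemma mul_map_antipode : ψ * ψ.map (antipode R) = 1 := by
  ext i j
  have h := HopfAlgebra.sum_mul_antipode_eq_smul (R := R)
    ⟨Finset.univ, ψ i, (ψ · j), (hψ.comul_apply i j).symm⟩
  simpa [Matrix.mul_apply, hψ.counit_apply, Matrix.one_apply] using h

lemma map_antipode_mul : ψ.map (antipode R) * ψ = 1 := by
  ext i j
  have h := HopfAlgebra.sum_antipode_mul_eq_smul (R := R)
    ⟨Finset.univ, ψ i, (ψ · j), (hψ.comul_apply i j).symm⟩
  simpa [Matrix.mul_apply, hψ.counit_apply, Matrix.one_apply] using h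

lemma map_comul_map_antipode :
    (ψ.map (antipode R)).map (comulAlgHom R H) =
      (ψ.map (antipode R)).map (includeRight : H →ₐ[R] H ⊗[R] H) *
        (ψ.map (antipode R)).map (includeLeft : H →ₐ[R] H ⊗[R] H) := by
  have map_mul_map (f : H →ₐ[R] H ⊗[R] H) {A B : Matrix n n H} (h : A * B = 1) :
      A.map f * B.map f = 1 := by
    rw [← Matrix.map_mul, h, Matrix.map_one _ (map_zero f) (map_one f)]
  refine left_inv_eq_right_inv (map_mul_map _ hψ.map_antipode_mul) ?_
  rw [hψ.map_comul, mul_assoc, ← mul_assoc (ψ.map _) _ (Matrix.map _ _),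
    map_mul_map _ hψ.mul_map_antipode, one_mul, map_mul_map _ hψ.mul_map_antipode]

lemma transpose_map_antipode : IsMultiplicativeMatrix R (ψ.map (antipode R))ᵀ where
  comul_apply i j := by
    simpa [Matrix.mul_apply] using congrFun₂ hψ.map_comul_map_antipode j i
  counit_apply i j := by simp [hψ.counit_apply, eq_comm]

end IsMultiplicativeMatrix

end MultiplicativeMatrix

section RForm

variable {R H : Type*} [CommRing R] [Ring H]

/-- The axioms of a universal r-form on `H` that concern the product of `H` and the second
argument of `r`: the commutation relation `r(a₁, b₁) a₂ b₂ = r(a₂, b₂) b₁ a₁` and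
`r(a, b c) = r(a₁, c) r(a₂, b)`, `r(a, 1) = ε(a)`. Sweedler sums are encoded by arbitrary finite
representations of the coproducts. -/
structure IsRightRForm [Bialgebra R H] (r : H →ₗ[R] H →ₗ[R] R) : Prop where
  sum_smul_mul : ∀ {a b : H} {ι κ : Type} [Fintype ι] [Fintype κ]
    {a₁ a₂ : ι → H} {b₁ b₂ : κ → H},
    comul (R := R) a = ∑ t, a₁ t ⊗ₜ[R] a₂ t →
    comul (R := R) b = ∑ s, b₁ s ⊗ₜ[R] b₂ s →
    ∑ t, ∑ s, r (a₁ t) (b₁ s) • (a₂ t * b₂ s) = ∑ t, ∑ s, r (a₂ t) (b₂ s) • (b₁ s * a₁ t)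
  apply_mul : ∀ {a : H} (b c : H) {ι : Type} [Fintype ι] {a₁ a₂ : ι → H},
    comul (R := R) a = ∑ t, a₁ t ⊗ₜ[R] a₂ t →
    r a (b * c) = ∑ t, r (a₁ t) c * r (a₂ t) b
  apply_one : ∀ a : H, r a 1 = counit (R := R) a

variable [HopfAlgebra R H] {n : Type} [Fintype n]

/-- The values on the entries of `ψ` of the Drinfeld functional `a ↦ r(a₁, S(a₂))`, which
implements the square of the antipode. -/
def drinfeldMatrix (r : H →ₗ[R] H →ₗ[R] R) (ψ : Matrix n n H) : Matrix n n R :=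
  of fun i l => ∑ p, r (ψ i p) (antipode R (ψ p l))

namespace IsRightRForm

variable [DecidableEq n] {r : H →ₗ[R] H →ₗ[R] R} (hr : IsRightRForm r)
  {ψ : Matrix n n H} (hψ : IsMultiplicativeMatrix R ψ)
include hr hψ

lemma transpose_map_antipode_mul_drinfeldMatrix_mul :
    (ψ.map (antipode R))ᵀ * ((drinfeldMatrix r ψ)ᵀ.map (algebraMap R H) * ψᵀ) =
      (drinfeldMatrix r ψ)ᵀ.map (algebraMap R H) := by
  set S := ψ.map (antipode R) with hS
  ext l i
  have commutation : ∑ j, ∑ p, ∑ q, r (ψ i p) (S q l) • (ψ p j * S j q) =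
      ∑ j, ∑ p, ∑ q, r (ψ p j) (S j q) • (S q l * ψ i p) :=
    Finset.sum_congr rfl fun j _ =>
      hr.sum_smul_mul (hψ.comul_apply i j) (hψ.transpose_map_antipode.comul_apply l j)
  have left : ∑ j, ∑ p, ∑ q, r (ψ i p) (S q l) • (ψ p j * S j q) =
      algebraMap R H (drinfeldMatrix r ψ i l) :=
    calc _ = ∑ p, ∑ q, r (ψ i p) (S q l) • (ψ * S) p q := by
          simp only [Matrix.mul_apply, Finset.smul_sum]
          rw [Finset.sum_comm]
          exact Finset.sum_congr rfl fun p _ => Finset.sum_comm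
      _ = _ := by
          rw [hψ.mul_map_antipode]
          simp [drinfeldMatrix, hS, Matrix.one_apply, Algebra.algebraMap_eq_smul_one]
  have right : ∑ j, ∑ p, ∑ q, r (ψ p j) (S j q) • (S q l * ψ i p) =
      ∑ q, S q l * ∑ p, drinfeldMatrix r ψ p q • ψ i p := by
    simp only [drinfeldMatrix, hS, Matrix.of_apply, Matrix.map_apply, Finset.mul_sum,
      Finset.sum_smul, mul_smul_comm]
    rw [Finset.sum_comm_cycle]
    exact Finset.sum_congr rfl fun q _ => Finset.sum_comm
  simpa [Matrix.mul_apply, Algebra.smul_def] using (right.symm.trans commutation.symm).trans left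

lemma sum_drinfeldMatrix_smul (i m : n) :
    ∑ l, drinfeldMatrix r ψ i l • antipode R (antipode R (ψ l m)) =
      ∑ p, drinfeldMatrix r ψ p m • ψ i p := by
  set C := (drinfeldMatrix r ψ)ᵀ.map (algebraMap R H) with hC
  have h : ((ψ.map (antipode R)).map (antipode R))ᵀ * C = C * ψᵀ := by
    refine .trans ?_ (one_mul _)
    rw [← hψ.transpose_map_antipode.map_antipode_mul, mul_assoc,
      hr.transpose_map_antipode_mul_drinfeldMatrix_mul hψ]
    rfl
  simpa [Matrix.mul_apply, hC, Algebra.smul_def, Algebra.commutes] using congrFun₂ h m i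

lemma sum_mul_antipode (i j k l : n) :
    ∑ p, ∑ q, r (ψ i p) (ψ q l) * r (ψ p j) (antipode R (ψ k q)) =
      (1 : Matrix n n R) i j * (1 : Matrix n n R) k l := by
  calc _ = r (ψ i j) ((ψ.map (antipode R) * ψ) k l) := by
        rw [Finset.sum_comm, Matrix.mul_apply, map_sum]
        exact Finset.sum_congr rfl fun q _ => (hr.apply_mul _ _ (hψ.comul_apply i j)).symm
    _ = _ := by
        rw [hψ.map_antipode_mul, Matrix.one_apply, Matrix.one_apply, Matrix.one_apply]
        split_ifs <;> simp [hr.apply_one, hψ.counit_apply, *]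

lemma isUnit_drinfeldMatrix : IsUnit (drinfeldMatrix r ψ) := by
  set S := antipode R (A := H)
  let B : Matrix n n R := of fun l j => ∑ m, r (S (S (ψ l m))) (ψ m j)
  suffices drinfeldMatrix r ψ * B = 1 from IsUnit.of_mul_eq_one B this
  ext i j
  calc (drinfeldMatrix r ψ * B) i j
      = ∑ m, r (∑ l, drinfeldMatrix r ψ i l • S (S (ψ l m))) (ψ m j) := by
        simp only [B, Matrix.mul_apply, Matrix.of_apply, Finset.mul_sum, map_sum,
          LinearMap.sum_apply, map_smul, LinearMap.smul_apply, smul_eq_mul]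
        exact Finset.sum_comm
    _ = ∑ m, ∑ p, drinfeldMatrix r ψ p m * r (ψ i p) (ψ m j) := by
        simp [S, hr.sum_drinfeldMatrix_smul hψ]
    _ = ∑ q, ∑ p, ∑ m, r (ψ i p) (ψ m j) * r (ψ p q) (S (ψ q m)) := by
        simp only [drinfeldMatrix, Matrix.of_apply, Finset.sum_mul, mul_comm (r (ψ i _) _)]
        rw [Finset.sum_comm_cycle]
        exact Finset.sum_congr rfl fun q _ => Finset.sum_comm
    _ = (1 : Matrix n n R) i j := by
        simp [S, hr.sum_mul_antipode hψ, Matrix.one_apply]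

lemma isUnit_transpose : IsUnit ψᵀ := by
  have hC : IsUnit ((drinfeldMatrix r ψ)ᵀ.map (algebraMap R H)) :=
    ((Matrix.isUnit_transpose _).mpr (hr.isUnit_drinfeldMatrix hψ)).map (algebraMap R H).mapMatrix
  have hS : IsUnit (ψ.map (antipode R))ᵀ :=
    ⟨⟨_, _, hψ.transpose_map_antipode.mul_map_antipode,
      hψ.transpose_map_antipode.map_antipode_mul⟩, rfl⟩
  have h : IsUnit ((ψ.map (antipode R))ᵀ *
      ((drinfeldMatrix r ψ)ᵀ.map (algebraMap R H) * ψᵀ)) := by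
    rwa [hr.transpose_map_antipode_mul_drinfeldMatrix_mul hψ]
  exact hC.mul_left_iff.mp (hS.mul_left_iff.mp h)

end IsRightRForm

end RForm

section Contraction

variable {R : Type*} [CommRing R]

/-- The contraction `a ↦ f(a₂) a₁` of a map `δ a = a₁ ⊗ a₂` with a functional `f`. -/
def contract {M N : Type*} [AddCommGroup M] [Module R M] [AddCommGroup N] [Module R N]
    (δ : N →ₗ[R] M ⊗[R] N) : (N →ₗ[R] R) →ₗ[R] N →ₗ[R] M :=
  δ.lcomp R M ∘ₗ (TensorProduct.rid R M).toLinearMap.compRight R ∘ₗ LinearMap.lTensorHom M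

section Module

variable {M N : Type*} [AddCommGroup M] [Module R M] [AddCommGroup N] [Module R N]
  {δ : N →ₗ[R] M ⊗[R] N}

lemma contract_apply (f : N →ₗ[R] R) (a : N) :
    contract δ f a = TensorProduct.rid R M (f.lTensor M (δ a)) := rfl

lemma contract_eq_sum {ι : Type*} [Fintype ι] {a : N} {a₁ : ι → M} {a₂ : ι → N}
    (ha : δ a = ∑ t, a₁ t ⊗ₜ[R] a₂ t) (f : N →ₗ[R] R) :
    contract δ f a = ∑ t, f (a₂ t) • a₁ t := by
  simp [contract_apply, ha]

end Module

lemma contract_mul {A B : Type*} [Ring A] [Algebra R A] [Ring B] [Algebra R B]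
    {δ : B →ₗ[R] A ⊗[R] B} {ι : Type*} [Fintype ι] {f : B →ₗ[R] R} {g h : ι → B →ₗ[R] R}
    {a b : B} (hab : δ (a * b) = δ a * δ b) (hf : ∀ x y, f (x * y) = ∑ l, g l x * h l y) :
    contract δ f (a * b) = ∑ l, contract δ (g l) a * contract δ (h l) b := by
  simp only [contract_apply, hab]
  induction δ a using TensorProduct.induction_on with
  | zero => simp
  | add u v hu hv => simp [add_mul, hu, hv, Finset.sum_add_distrib]
  | tmul u x =>
    induction δ b using TensorProduct.induction_on with
    | zero => simp
    | add u v hu hv => simp [mul_add, hu, hv, Finset.sum_add_distrib]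
    | tmul v y => simp [hf, Finset.sum_smul, smul_smul, mul_comm]

end Contraction

section LeftCoideal

variable {R H : Type*} [CommRing R] [Ring H] [Bialgebra R H] {X : Subalgebra R H}
  {δ : X →ₗ[R] H ⊗[R] X}
  (hδ : ∀ a : X, X.val.toLinearMap.lTensor H (δ a) = comul (R := R) (a : H))
include hδ

lemma coaction_mul [Module.Flat R H] (a b : X) : δ (a * b) = δ a * δ b := by
  apply Module.Flat.lTensor_preserves_injective_linearMap (M := H) X.val.toLinearMap
    Subtype.val_injective
  have h := map_mul (Algebra.TensorProduct.map (AlgHom.id R H) X.val) (δ a) (δ b)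
  rw [hδ]
  refine .trans ?_ h.symm
  rw [MulMemClass.coe_mul, comul_mul, ← hδ a, ← hδ b]
  rfl

lemma comul_coe_eq_sum {ι : Type*} [Fintype ι] {a : X} {a₁ : ι → H} {a₂ : ι → X}
    (ha : δ a = ∑ t, a₁ t ⊗ₜ[R] a₂ t) :
    comul (R := R) (a : H) = ∑ t, a₁ t ⊗ₜ[R] (a₂ t : H) := by
  simp [← hδ, ha]

lemma contract_counit (a : X) : contract δ (counit ∘ₗ X.val.toLinearMap) a = (a : H) := by
  rw [contract_apply, LinearMap.lTensor_comp_apply, hδ, Coalgebra.lTensor_counit_comul,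
    TensorProduct.rid_tmul, one_smul]

lemma coe_eq_sum_counit_smul {ι : Type*} [Fintype ι] {b : ι → X} {ψ : Matrix ι ι H}
    (hb : ∀ i, δ (b i) = ∑ j, ψ i j ⊗ₜ[R] b j) (i : ι) :
    (b i : H) = ∑ j, counit (R := R) (b j : H) • ψ i j := by
  rw [← contract_counit hδ, contract_eq_sum (hb i)]
  rfl

end LeftCoideal

section ChiFunctional

variable {R H : Type*} [CommRing R] [Ring H] [Bialgebra R H] {X : Subalgebra R H}

/-- The functional `a ↦ r(h, ν(a))` on `X`, linearly in `h`. -/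
def pairing (r : H →ₗ[R] H →ₗ[R] R) (ν : X →ₐ[R] X) : H →ₗ[R] X →ₗ[R] R :=
  r.compl₂ (X.val.comp ν).toLinearMap

/-- The functional `a ↦ r(h, ν(a)) - ε(h) ε(a)` on `X`, linearly in `h`; the paper's `χ^i` is its
value at `h = b^i`. -/
def chi (r : H →ₗ[R] H →ₗ[R] R) (ν : X →ₐ[R] X) : H →ₗ[R] X →ₗ[R] R :=
  pairing r ν - (counit (R := R) (A := H)).smulRight (counit ∘ₗ X.val.toLinearMap)

variable {r : H →ₗ[R] H →ₗ[R] R} {ν : X →ₐ[R] X} {δ : X →ₗ[R] H ⊗[R] X}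
  (hδ : ∀ a : X, X.val.toLinearMap.lTensor H (δ a) = comul (R := R) (a : H))
  {n : Type} [Fintype n] {b : n → X} {ψ : Matrix n n H}
  (hb : ∀ i, δ (b i) = ∑ j, ψ i j ⊗ₜ[R] b j)
include hδ

lemma contract_chi (h : H) (a : X) :
    contract δ (chi r ν h) a =
      contract δ (pairing r ν h) a - counit (R := R) h • (a : H) := by
  simp [chi, contract_counit hδ]

include hb

lemma contract_pairing (k : n) (a : X) :
    contract δ (pairing r ν (b k)) a =
      ∑ l, counit (R := R) (b l : H) • contract δ (pairing r ν (ψ k l)) a := by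
  rw [coe_eq_sum_counit_smul hδ hb k]
  simp

variable (hr : IsRightRForm r)
include hr

lemma contract_pairing_mul [Module.Flat R H] (k : n) (a c : X) :
    contract δ (pairing r ν (b k)) (a * c) =
      ∑ l, contract δ (pairing r ν (b l)) a * contract δ (pairing r ν (ψ k l)) c :=
  contract_mul (coaction_mul hδ a c) fun x y => by
    simpa [pairing, mul_comm] using
      hr.apply_mul (ν x : H) (ν y : H) (comul_coe_eq_sum hδ (hb k))

lemma contract_chi_mul_sub [Module.Flat R H] (k : n) (a c : X) :
    contract δ (chi r ν (b k)) (a * c) - a * contract δ (chi r ν (b k)) c =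
      ∑ l, contract δ (chi r ν (b l)) a * contract δ (pairing r ν (ψ k l)) c := by
  simp only [contract_chi hδ, sub_mul, mul_sub, Finset.sum_sub_distrib]
  rw [contract_pairing_mul hδ hb hr, contract_pairing hδ hb k c]
  simp [Finset.mul_sum]

variable (hν : ∀ a : X, δ (ν a) = ν.toLinearMap.lTensor H (δ a))
include hν

lemma sum_contract_pairing_mul_mem (k : n) (a : X) :
    ∑ l, contract δ (pairing r ν (b l)) a * ψ k l ∈ X := by
  obtain ⟨N, a₁, a₂, ha⟩ := TensorProduct.exists_sum_tmul_eq (δ a)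
  have hνa : δ (ν a) = ∑ t, a₁ t ⊗ₜ[R] ν (a₂ t) := by simp [hν, ha]
  have commutation :=
    hr.sum_smul_mul (comul_coe_eq_sum hδ (hb k)) (comul_coe_eq_sum hδ hνa)
  have h : ∑ l, contract δ (pairing r ν (b l)) a * ψ k l =
      ∑ l, ∑ t, r (ψ k l) (a₁ t) • ((b l : H) * ν (a₂ t)) := by
    simp [contract_eq_sum ha, pairing, Finset.sum_mul, commutation]
  rw [h]
  exact X.sum_mem fun l _ => X.sum_mem fun t _ => X.smul_mem (X.mul_mem (b l).2 (ν _).2) _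

lemma sum_contract_chi_mul_mem (k : n) (a : X) :
    ∑ l, contract δ (chi r ν (b l)) a * ψ k l ∈ X := by
  have h : ∑ l, contract δ (chi r ν (b l)) a * ψ k l =
      ∑ l, contract δ (pairing r ν (b l)) a * ψ k l - a * b k := by
    rw [coe_eq_sum_counit_smul hδ hb k]
    simp [contract_chi hδ, sub_mul, Finset.mul_sum]
  rw [h]
  exact X.sub_mem (sum_contract_pairing_mul_mem hδ hb hr hν k a) (X.mul_mem a.2 (b k).2)

end ChiFunctional

section PartialDerivatives

variable {R H : Type*} [CommRing R] [Ring H] [HopfAlgebra R H] {X : Subalgebra R H}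
  {n : Type*}

/-- The matrix `(χ_l ▷ e_m)_{m,l}` of the contractions of the `e_m` with the functionals `χ_l`. -/
def contractMatrix (δ : X →ₗ[R] H ⊗[R] X) (χ : n → X →ₗ[R] R) (e : n → X) : Matrix n n H :=
  of fun m l => contract δ (χ l) (e m)

variable [Fintype n]

/-- The matrix `G_{ki} = (χ⁻¹)_{jk} S(π^j_i)` through which the partial derivatives are
`∂_i(a) = χ^k(a₂) a₁ G_{ki}`. -/
def dualMatrix (π : Matrix n n H) (χinv : Matrix n n R) : Matrix n n H :=
  χinvᵀ.map (algebraMap R H) * π.map (antipode R)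

/-- The partial derivatives `∂_i(a) = a₁ χ^k(a₂) (χ⁻¹)_{jk} S(π^j_i)`. -/
def partialDeriv (δ : X →ₗ[R] H ⊗[R] X) (χ : n → X →ₗ[R] R) (π : Matrix n n H)
    (χinv : Matrix n n R) (i : n) (a : X) : H :=
  ∑ k, contract δ (χ k) a * dualMatrix π χinv k i

/-- The coefficients `ω_i = ε(b^k) (χ⁻¹)_{jk} S(π^j_i)` of the form `ω` implementing `d`. -/
def innerCoeff (π : Matrix n n H) (χinv : Matrix n n R) (b : n → X) (i : n) : H :=
  ∑ k, counit (R := R) (b k : H) • dualMatrix π χinv k i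

variable {δ : X →ₗ[R] H ⊗[R] X} {χ : n → X →ₗ[R] R} {e b : n → X} {π : Matrix n n H}
  {χinv : Matrix n n R}

lemma dualMatrix_apply (k i : n) :
    dualMatrix π χinv k i = ∑ j, χinv j k • antipode R (π j i) := by
  simp [dualMatrix, Matrix.mul_apply, Algebra.smul_def]

lemma partialDeriv_eq_sum {ι : Type*} [Fintype ι] {a : X} {a₁ : ι → H} {a₂ : ι → X}
    (ha : δ a = ∑ t, a₁ t ⊗ₜ[R] a₂ t) (i : n) :
    partialDeriv δ χ π χinv i a =
      ∑ t, ∑ j, ∑ k, (χ k (a₂ t) * χinv j k) • (a₁ t * antipode R (π j i)) := by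
  simp only [partialDeriv, contract_eq_sum ha, dualMatrix_apply, Finset.sum_mul_sum,
    smul_mul_smul_comm]
  rw [Finset.sum_comm]
  exact Finset.sum_congr rfl fun t _ => Finset.sum_comm

lemma innerCoeff_eq_sum (i : n) :
    innerCoeff π χinv b i =
      ∑ j, ∑ k, (counit (R := R) (b k : H) * χinv j k) • antipode R (π j i) := by
  simp only [innerCoeff, dualMatrix_apply, Finset.smul_sum, smul_smul]
  exact Finset.sum_comm

variable (he : ∀ i, δ (e i) = ∑ j, π i j ⊗ₜ[R] e j)
include he

lemma contractMatrix_eq :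
    contractMatrix δ χ e = π * (of fun i j => χ i (e j))ᵀ.map (algebraMap R H) := by
  ext m l
  simp [contractMatrix, contract_eq_sum (he m), Matrix.mul_apply, Algebra.smul_def,
    Algebra.commutes]

variable [DecidableEq n] (hπ : IsMultiplicativeMatrix R π)
  (hχ : (of fun i j => χ i (e j)) * χinv = 1)
include hπ hχ

lemma dualMatrix_mul_contractMatrix : dualMatrix π χinv * contractMatrix δ χ e = 1 := by
  rw [contractMatrix_eq he, dualMatrix, mul_assoc, ← mul_assoc (π.map _), hπ.map_antipode_mul,
    one_mul, ← Matrix.map_mul, ← transpose_mul, hχ]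
  simp

lemma contractMatrix_mul_dualMatrix : contractMatrix δ χ e * dualMatrix π χinv = 1 := by
  rw [contractMatrix_eq he, dualMatrix, mul_assoc, ← mul_assoc (Matrix.map _ _),
    ← Matrix.map_mul, ← transpose_mul, mul_eq_one_comm.mp hχ]
  simp [hπ.mul_map_antipode]

lemma sum_innerCoeff_mul_contract (l : n) :
    ∑ m, innerCoeff π χinv b m * contract δ (χ l) (e m) =
      algebraMap R H (counit (R := R) (b l : H)) := by
  have h (k : n) : ∑ m, dualMatrix π χinv k m * contract δ (χ l) (e m) =
      (1 : Matrix n n H) k l := by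
    rw [← dualMatrix_mul_contractMatrix he hπ hχ]
    rfl
  simp only [innerCoeff, Finset.sum_mul, smul_mul_assoc]
  rw [Finset.sum_comm]
  simp [← Finset.smul_sum, h, Matrix.one_apply, Algebra.algebraMap_eq_smul_one]

end PartialDerivatives

section Construction

variable {R H : Type*} [CommRing R] [Ring H] [HopfAlgebra R H] {X : Subalgebra R H}
  {n : Type} [Fintype n] [DecidableEq n] {r : H →ₗ[R] H →ₗ[R] R} {δ : X →ₗ[R] H ⊗[R] X}
  {e b : n → X} {π ψ : Matrix n n H} {ν : X →ₐ[R] X} {χinv : Matrix n n R}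

/-- The invertibility-closure property of `X` for matrices indexed by `n`: the inverse of a matrix
with entries in `X` has entries in `X`. -/
def IsInverseClosed (X : Subalgebra R H) (n : Type*) [Fintype n] [DecidableEq n] : Prop :=
  ∀ x : (Matrix n n H)ˣ, (∀ i j, x.val i j ∈ X) → ∀ i j, x.inv i j ∈ X

variable (hr : IsRightRForm r)
  (hδ : ∀ a : X, X.val.toLinearMap.lTensor H (δ a) = comul (R := R) (a : H))
  (hπ : IsMultiplicativeMatrix R π) (he : ∀ i, δ (e i) = ∑ j, π i j ⊗ₜ[R] e j)
  (hb : ∀ i, δ (b i) = ∑ j, ψ i j ⊗ₜ[R] b j)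
  (hχ : (of fun i j => chi r ν (b i) (e j)) * χinv = 1)
include hr hδ hπ he hb hχ

lemma innerCoeff_mem (hψ : IsMultiplicativeMatrix R ψ) (hX : IsInverseClosed X n)
    (hν : ∀ a : X, δ (ν a) = ν.toLinearMap.lTensor H (δ a)) (i : n) :
    innerCoeff π χinv b i ∈ X := by
  set F := contractMatrix δ (fun k => chi r ν (b k)) e
  set G := dualMatrix π χinv
  have hGF : G * F = 1 := dualMatrix_mul_contractMatrix he hπ hχ
  have hF : IsUnit F := ⟨⟨F, G, contractMatrix_mul_dualMatrix he hπ hχ, hGF⟩, rfl⟩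
  obtain ⟨x, hx⟩ := hF.mul (hr.isUnit_transpose hψ)
  have x_mem (m k : n) : x.val m k ∈ X := by
    rw [hx]
    exact sum_contract_chi_mul_mem hδ hb hr hν k (e m)
  have hG : ψᵀ * x.inv = G := by
    rw [← one_mul (_ * _), ← hGF, mul_assoc, ← mul_assoc F, ← hx, x.val_inv, mul_one]
  have h : innerCoeff π χinv b i = ∑ k, (b k : H) * x.inv k i := by
    calc innerCoeff π χinv b i = ∑ l, counit (R := R) (b l : H) • (ψᵀ * x.inv) l i := by
          rw [hG]
          rfl
      _ = ∑ k, (∑ l, counit (R := R) (b l : H) • ψ k l) * x.inv k i := by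
          simp only [Matrix.mul_apply, Matrix.transpose_apply, Finset.smul_sum, Finset.sum_mul,
            smul_mul_assoc]
          exact Finset.sum_comm
      _ = ∑ k, (b k : H) * x.inv k i := by simp only [← coe_eq_sum_counit_smul hδ hb]
  rw [h]
  exact X.sum_mem fun k _ => X.mul_mem (b k).2 (hX x x_mem k i)

lemma sum_innerCoeff_mul_contract_sub [Module.Flat R H] (k : n) (a : X) :
    ∑ m, innerCoeff π χinv b m * (contract δ (chi r ν (b k)) (e m * a) -
        e m * contract δ (chi r ν (b k)) a) =
      contract δ (chi r ν (b k)) a + counit (R := R) (b k : H) • (a : H) := by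
  simp only [contract_chi_mul_sub hδ hb hr, Finset.mul_sum, ← mul_assoc]
  rw [Finset.sum_comm]
  simp only [← Finset.sum_mul, sum_innerCoeff_mul_contract he hπ hχ, ← Algebra.smul_def]
  rw [← contract_pairing hδ hb, contract_chi hδ, sub_add_cancel]

lemma sum_innerCoeff_mul_partialDeriv_sub [Module.Flat R H] (i : n) (a : X) :
    ∑ m, innerCoeff π χinv b m *
        (partialDeriv δ (fun k => chi r ν (b k)) π χinv i (e m * a) -
          e m * partialDeriv δ (fun k => chi r ν (b k)) π χinv i a) =
      partialDeriv δ (fun k => chi r ν (b k)) π χinv i a + a * innerCoeff π χinv b i := by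
  set D := fun k => contract δ (chi r ν (b k))
  set G := dualMatrix π χinv
  calc _ = ∑ k, (∑ m, innerCoeff π χinv b m * (D k (e m * a) - e m * D k a)) * G k i := by
        simp only [partialDeriv, Finset.mul_sum, ← Finset.sum_sub_distrib, Finset.sum_mul,
          mul_sub, sub_mul, mul_assoc, D, G]
        exact Finset.sum_comm
    _ = ∑ k, (D k a + counit (R := R) (b k : H) • (a : H)) * G k i := by
        simp only [D, sum_innerCoeff_mul_contract_sub hr hδ hπ he hb hχ]
    _ = _ := by
        simp [partialDeriv, innerCoeff, D, G, add_mul, Finset.sum_add_distrib, Finset.mul_sum]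

end Construction

section Bimodule

lemma eq_commutator_of_coordinates {A Γ n : Type*} [Ring A] [AddCommGroup Γ] [Module A Γ]
    [Module Aᵐᵒᵖ Γ] [SMulCommClass A Aᵐᵒᵖ Γ] [Fintype n] {d : A → Γ} {e w : n → A}
    {D : A → n → A} (leibniz : ∀ a b, d (a * b) = a • d b + op b • d a)
    (hD : ∀ a, d a = ∑ i, D a i • d (e i))
    (hw : ∀ a i, ∑ m, w m * (D (e m * a) i - e m * D a i) = D a i + a * w i) (a : A) :
    d a = op a • (∑ i, w i • d (e i)) - a • (∑ i, w i • d (e i)) := by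
  have right_smul (m : n) :
      op a • d (e m) = ∑ i, (D (e m * a) i - e m * D a i) • d (e i) := by
    rw [← sub_eq_iff_eq_add'.mpr (leibniz (e m) a), hD (e m * a), hD a]
    simp [sub_smul, mul_smul, Finset.smul_sum]
  rw [eq_sub_iff_add_eq]
  calc d a + a • ∑ i, w i • d (e i) = ∑ i, (D a i + a * w i) • d (e i) := by
        rw [hD a]
        simp [add_smul, mul_smul, Finset.smul_sum, Finset.sum_add_distrib]
    _ = ∑ m, w m • ∑ i, (D (e m * a) i - e m * D a i) • d (e i) := by
        simp only [← hw, Finset.sum_smul, mul_smul, Finset.smul_sum]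
        exact Finset.sum_comm
    _ = op a • ∑ m, w m • d (e m) := by
        simp only [← right_smul, Finset.smul_sum, smul_comm (w _) (op a)]

end Bimodule

theorem stmt16_general {R H : Type*} [CommRing R] [Ring H] [HopfAlgebra R H] [Module.Flat R H]
    {r : H →ₗ[R] H →ₗ[R] R} (hr : IsRightRForm r)
    {X : Subalgebra R H} {δ : X →ₗ[R] H ⊗[R] X}
    (hδ : ∀ a : X, X.val.toLinearMap.lTensor H (δ a) = comul (R := R) (a : H))
    {n : Type} [Fintype n] [DecidableEq n] (hX : IsInverseClosed X n)
    {e b : n → X} {π ψ : Matrix n n H}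
    (he : ∀ i, δ (e i) = ∑ j, π i j ⊗ₜ[R] e j) (hπ : IsMultiplicativeMatrix R π)
    (hb : ∀ i, δ (b i) = ∑ j, ψ i j ⊗ₜ[R] b j) (hψ : IsMultiplicativeMatrix R ψ)
    {ν : X →ₐ[R] X} (hν : ∀ a : X, δ (ν a) = ν.toLinearMap.lTensor H (δ a))
    {χinv : Matrix n n R} (hχ : (of fun i j => chi r ν (b i) (e j)) * χinv = 1)
    {Γ : Type*} [AddCommGroup Γ] [Module X Γ] [Module Xᵐᵒᵖ Γ] [SMulCommClass X Xᵐᵒᵖ Γ]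
    {d : X → Γ} (leibniz : ∀ a b : X, d (a * b) = a • d b + op b • d a)
    (hd : ∀ a : X, ∃ D : n → X, d a = ∑ i, D i • d (e i) ∧
      ∀ i, (D i : H) = partialDeriv δ (fun k => chi r ν (b k)) π χinv i a) :
    ∃ w : n → X,
      (∀ i, (w i : H) =
        ∑ j, ∑ k, (counit (R := R) (b k : H) * χinv j k) • antipode R (π j i)) ∧
      ∀ a : X, d a = op a • (∑ i, w i • d (e i)) - a • (∑ i, w i • d (e i)) := by
  choose D hdD hD using hd
  refine ⟨fun i => ⟨innerCoeff π χinv b i, innerCoeff_mem hr hδ hπ he hb hχ hψ hX hν i⟩,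
    innerCoeff_eq_sum, eq_commutator_of_coordinates leibniz hdD fun a i => Subtype.ext ?_⟩
  simpa [hD] using sum_innerCoeff_mul_partialDeriv_sub hr hδ hπ he hb hχ i a

end

/-- the calculus produced by the construction theorem is inner:
`d a = ω a − a ω` with `ω = Σ_i ω_i d e^i`, `ω_i = ε(b^k) (χ⁻¹)_{jk} S(π^j_i)`,
and each `ω_i` lies in `X`. -/
theorem stmt16
    {H : Type} [Ring H] [HopfAlgebra ℂ H]
    -- universal r-form
    (r : H →ₗ[ℂ] H →ₗ[ℂ] ℂ)
    (hr1 : ∀ (a b : H) (ι κ : Type) (_ : Fintype ι) (_ : Fintype κ)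
      (a1 a2 : ι → H) (b1 b2 : κ → H),
      Coalgebra.comul (R := ℂ) a = ∑ t, a1 t ⊗ₜ[ℂ] a2 t →
      Coalgebra.comul (R := ℂ) b = ∑ s, b1 s ⊗ₜ[ℂ] b2 s →
      ∑ t, ∑ s, r (a1 t) (b1 s) • (a2 t * b2 s)
        = ∑ t, ∑ s, r (a2 t) (b2 s) • (b1 s * a1 t))
    (hr2 : ∀ (a b c : H) (κ : Type) (_ : Fintype κ) (c1 c2 : κ → H),
      Coalgebra.comul (R := ℂ) c = ∑ s, c1 s ⊗ₜ[ℂ] c2 s →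
      r (a * b) c = ∑ s, r a (c1 s) * r b (c2 s))
    (hr2' : ∀ c : H, r 1 c = Coalgebra.counit (R := ℂ) c)
    (hr3 : ∀ (a b c : H) (ι : Type) (_ : Fintype ι) (a1 a2 : ι → H),
      Coalgebra.comul (R := ℂ) a = ∑ t, a1 t ⊗ₜ[ℂ] a2 t →
      r a (b * c) = ∑ t, r (a1 t) c * r (a2 t) b)
    (hr3' : ∀ a : H, r a 1 = Coalgebra.counit (R := ℂ) a)
    -- X: a left coideal subalgebra
    (X : Subalgebra ℂ H)
    (comulX : X →ₗ[ℂ] H ⊗[ℂ] X)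
    (hcomulX : ∀ a : X,
      (TensorProduct.map (LinearMap.id) X.val.toLinearMap) (comulX a)
        = Coalgebra.comul (R := ℂ) (a : H))
    -- invertibility-closure property of X
    (hclosure : ∀ (n : ℕ) (x y : Fin n → Fin n → H),
      (∀ i j, x i j ∈ X) →
      (∀ i j, ∑ k, x i k * y k j = if i = j then (1 : H) else 0) →
      (∀ i j, ∑ k, y i k * x k j = if i = j then (1 : H) else 0) →
      ∀ i j, y i j ∈ X)
    -- e^i and b^i with their matrix coefficients
    {M : ℕ} (e bb : Fin M → X) (π ψ : Fin M → Fin M → H)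
    (hπ : ∀ i, comulX (e i) = ∑ j, π i j ⊗ₜ[ℂ] e j)
    (hΔπ : ∀ i j, Coalgebra.comul (R := ℂ) (π i j) = ∑ k, π i k ⊗ₜ[ℂ] π k j)
    (hεπ : ∀ i j, Coalgebra.counit (R := ℂ) (π i j) = if i = j then 1 else 0)
    (hψ : ∀ i, comulX (bb i) = ∑ j, ψ i j ⊗ₜ[ℂ] bb j)
    (hΔψ : ∀ i j, Coalgebra.comul (R := ℂ) (ψ i j) = ∑ k, ψ i k ⊗ₜ[ℂ] ψ k j)
    (hεψ : ∀ i j, Coalgebra.counit (R := ℂ) (ψ i j) = if i = j then 1 else 0)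
    -- covariant algebra endomorphism ν of X
    (ν : X →ₐ[ℂ] X)
    (hν : ∀ a : X, comulX (ν a) = (TensorProduct.map LinearMap.id ν.toLinearMap) (comulX a))
    -- the functionals χ^i and the invertible matrix χ
    (χ : Fin M → X → ℂ)
    (hχ : ∀ i (a : X), χ i a =
      r ((bb i : H)) ((ν a : H))
        - Coalgebra.counit (R := ℂ) ((bb i : H)) * Coalgebra.counit (R := ℂ) ((a : H)))
    (χinv : Fin M → Fin M → ℂ)
    (hχinv1 : ∀ i j, ∑ k, χ i (e k) * χinv k j = if i = j then 1 else 0)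
    (hχinv2 : ∀ i j, ∑ k, χinv i k * χ k (e j) = if i = j then 1 else 0)
    -- the constructed calculus: d a = ∂_i(a) d e^i with the formula for ∂_i
    (c : CovCalc X comulX e)
    (hD : ∀ (a : X) (co : Fin M → X), c.d a = ∑ i, co i • c.d (e i) →
      ∀ (i : Fin M) (ι : Type) (_ : Fintype ι) (a1 : ι → H) (a2 : ι → X),
        comulX a = ∑ t, a1 t ⊗ₜ[ℂ] a2 t →
        ((co i : H)) = ∑ t, ∑ j, ∑ k, (χ k (a2 t) * χinv j k) •
          (a1 t * HopfAlgebra.antipode (R := ℂ) (π j i))) :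
    ∃ w : Fin M → X,
      (∀ i, ((w i : H)) = ∑ j, ∑ k,
        (Coalgebra.counit (R := ℂ) ((bb k : H)) * χinv j k) •
          HopfAlgebra.antipode (R := ℂ) (π j i)) ∧
      (∀ a : X, c.d a =
        op a • (∑ i, w i • c.d (e i)) - a • (∑ i, w i • c.d (e i))) := by
  obtain rfl : χ = fun k a => chi r ν (bb k) a := by
    ext i a
    exact hχ i a
  refine stmt16_general (r := r) (δ := comulX) (ν := ν) (π := π) (ψ := ψ) (χinv := χinv)
    ⟨hr1 _ _ _ _ _ _ _ _ _ _, fun b c => hr3 _ b c _ _ _ _, hr3'⟩ hcomulX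
    (fun x hx => hclosure M x.val x.inv hx (fun i j => congrFun₂ x.val_inv i j)
      (fun i j => congrFun₂ x.inv_val i j)) hπ ⟨hΔπ, hεπ⟩ hψ ⟨hΔψ, hεψ⟩ hν
    (Matrix.ext hχinv1) c.leibniz fun a => ?_
  obtain ⟨N, a₁, a₂, ha⟩ := TensorProduct.exists_sum_tmul_eq (comulX a)
  obtain ⟨D, hcD⟩ := (c.free (c.d a)).exists
  exact ⟨D, hcD, fun i => (hD a D hcD i _ _ _ _ ha).trans (partialDeriv_eq_sum ha i).symm⟩
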